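/- Let f be a smooth function on a neighborhood of (0,0) in ℝ² with f(0,0) = 0 and ∇f(0,0) = (0,0), let ψ be a smooth function of one variable with ψ(0) = 0, and suppose F(x,y) = f(x, y + ψ(x)) has nonvanishing Taylor series at the origin with Newton distance d = d(F) > 2. Let V(F) be the finite set of vertices of N(F), F*(x,y) = (Σ_{(a,b) ∈ V(F)} x^{2a} y^{2b})^{1/2}, and let D(x,y) be the determinant of the Hessian matrix of f. Assume there exist ε₀ > 0 and a neighborhood of (0,0) on which |D|^{−ε₀} is integrable. Then for every real s > −2/(d−2) there exist δ > 0 and a neighborhood U of (0,0) such that ∫_U F*(x, y − ψ(x))^{s(1/2 − 1/d)} |D(x,y)|^{δ s} dx dy < ∞. -/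

import Mathlib

open MeasureTheory Set Filter Topology

noncomputable section

/-- Iterated partial derivative `∂ₓᵃ ∂ᵧᵇ R` at `(x, y)`. -/
def pderiv2 (R : ℝ → ℝ → ℝ) (a b : ℕ) (x y : ℝ) : ℝ :=
  iteratedDeriv a (fun x' => iteratedDeriv b (fun y' => R x' y') y) x

/-- Taylor coefficient `R_{ab} = ∂ₓᵃ ∂ᵧᵇ R(0,0) / (a! b!)`. -/
def tcoeff (R : ℝ → ℝ → ℝ) (a b : ℕ) : ℝ :=
  pderiv2 R a b 0 0 / (Nat.factorial a * Nat.factorial b)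

/-- The support of the Taylor series of `R` at the origin. -/
def tsupp (R : ℝ → ℝ → ℝ) : Set (ℕ × ℕ) := {p | tcoeff R p.1 p.2 ≠ 0}

/-- The Newton polygon of `R`. -/
def newtonPolygon (R : ℝ → ℝ → ℝ) : Set (ℝ × ℝ) :=
  convexHull ℝ (⋃ p ∈ tsupp R, {q : ℝ × ℝ | (p.1 : ℝ) ≤ q.1 ∧ (p.2 : ℝ) ≤ q.2})

/-- The Newton distance of `R`. -/
def newtonDist (R : ℝ → ℝ → ℝ) : ℝ := sInf {t : ℝ | (t, t) ∈ newtonPolygon R}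

/-- `e` is a compact edge of `N(R)` of slope `-1/M` (with `M > 0`): it is the
(one-dimensional, compact) face of the Newton polygon cut out by a supporting line
`t₁ + M t₂ = c`. -/
def IsCompactEdge (R : ℝ → ℝ → ℝ) (M : ℝ) (e : Set (ℝ × ℝ)) : Prop :=
  0 < M ∧ ∃ c : ℝ, (∀ q ∈ newtonPolygon R, c ≤ q.1 + M * q.2) ∧
    e = {q ∈ newtonPolygon R | q.1 + M * q.2 = c} ∧
    ∃ v w : ℝ × ℝ, v ≠ w ∧ e = segment ℝ v w

/-- The edge polynomial `R_e(x,y) = Σ_{(a,b) ∈ e ∩ supp R} R_{ab} x^a y^b`. -/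
def edgePoly (R : ℝ → ℝ → ℝ) (e : Set (ℝ × ℝ)) (x y : ℝ) : ℝ :=
  ∑' p : ℕ × ℕ,
    Set.indicator {p : ℕ × ℕ | ((p.1 : ℝ), (p.2 : ℝ)) ∈ e}
      (fun p => tcoeff R p.1 p.2 * x ^ p.1 * y ^ p.2) p

/-- `p` has a zero of order exactly `m` at `y₀`. -/
def ZeroOfOrder (p : ℝ → ℝ) (m : ℕ) (y₀ : ℝ) : Prop :=
  (∀ j < m, iteratedDeriv j p y₀ = 0) ∧ iteratedDeriv m p y₀ ≠ 0

/-- `R` is in nonadapted coordinates: the bisectrix meets the interior of a compact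
edge `e` such that `R_e(1, ⬝)` has a real zero of order greater than `d(R)`. -/
def IsNonadapted (R : ℝ → ℝ → ℝ) : Prop :=
  ∃ (M : ℝ) (e : Set (ℝ × ℝ)) (v w : ℝ × ℝ), IsCompactEdge R M e ∧ v ≠ w ∧
    e = segment ℝ v w ∧ (∃ t : ℝ, (t, t) ∈ openSegment ℝ v w) ∧
    ∃ (y₀ : ℝ) (m : ℕ), newtonDist R < (m : ℝ) ∧
      ZeroOfOrder (fun y => edgePoly R e 1 y) m y₀

/-- `R` is in generic adapted coordinates: adapted coordinates, every compact edge has slope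
at least `-1`, and the Newton polygon meets the `t₂`-axis. -/
def GenericAdapted (R : ℝ → ℝ → ℝ) : Prop :=
  ¬ IsNonadapted R ∧ (∀ M e, IsCompactEdge R M e → 1 ≤ M) ∧
    ∃ t : ℝ, ((0 : ℝ), t) ∈ newtonPolygon R

/-- `α_M(R) = min {a + M b : (a,b) ∈ supp R}`. -/
def alphaM (R : ℝ → ℝ → ℝ) (M : ℝ) : ℝ :=
  sInf {t : ℝ | ∃ p ∈ tsupp R, t = (p.1 : ℝ) + M * p.2}

/-- `R_M`, the sum of the terms of the Taylor series of `R` of minimal `M`-weighted degree. -/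
def RMpart (R : ℝ → ℝ → ℝ) (M : ℝ) (x y : ℝ) : ℝ :=
  ∑' p : ℕ × ℕ,
    Set.indicator {p : ℕ × ℕ | p ∈ tsupp R ∧ (p.1 : ℝ) + M * p.2 = alphaM R M}
      (fun p => tcoeff R p.1 p.2 * x ^ p.1 * y ^ p.2) p

/-- The Hessian determinant of `f`. -/
def hessDet (f : ℝ → ℝ → ℝ) (x y : ℝ) : ℝ :=
  pderiv2 f 2 0 x y * pderiv2 f 0 2 x y - (pderiv2 f 1 1 x y) ^ 2

/-- `F*(x,y) = (Σ_{(a,b) vertex of N(F)} x^{2a} y^{2b})^{1/2}`. -/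
def vertexFn (F : ℝ → ℝ → ℝ) (x y : ℝ) : ℝ :=
  Real.sqrt (∑' p : ℕ × ℕ,
    Set.indicator
      {p : ℕ × ℕ | ((p.1 : ℝ), (p.2 : ℝ)) ∈ (newtonPolygon F).extremePoints ℝ}
      (fun p => x ^ (2 * p.1) * y ^ (2 * p.2)) p)


/-- Vertices of the Newton polygon form an antichain in `ℕ × ℕ`, so there are finitely many. -/
theorem finite_vertices (R : ℝ → ℝ → ℝ) :
    {p : ℕ × ℕ | ((p.1 : ℝ), (p.2 : ℝ)) ∈ (newtonPolygon R).extremePoints ℝ}.Finite := by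
  apply WellQuasiOrderedLE.finite_of_isAntichain
  intro p hp q hq hpq hle
  simp only [mem_ofPred_eq] at hp hq
  have hp' := extremePoints_convexHull_subset hp
  simp only [mem_iUnion, mem_ofPred_eq, exists_prop] at hp'
  obtain ⟨r, hr, h1, h2⟩ := hp'
  have hle1 : (p.1 : ℝ) ≤ q.1 := by exact_mod_cast hle.1
  have hle2 : (p.2 : ℝ) ≤ q.2 := by exact_mod_cast hle.2
  have hmem : ((2 * q.1 - p.1 : ℝ), (2 * q.2 - p.2 : ℝ)) ∈ newtonPolygon R := by
    apply subset_convexHull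
    simp only [mem_iUnion, mem_ofPred_eq, exists_prop]
    exact ⟨r, hr, by linarith, by linarith⟩
  have hseg : ((q.1 : ℝ), (q.2 : ℝ)) ∈ openSegment ℝ ((p.1 : ℝ), (p.2 : ℝ))
      ((2 * q.1 - p.1 : ℝ), (2 * q.2 - p.2 : ℝ)) := by
    refine ⟨1 / 2, 1 / 2, by norm_num, by norm_num, by norm_num, ?_⟩
    ext <;> simp <;> ring
  have heq := hq.2 hp.1 hmem hseg
  simp only [Prod.mk.injEq, Nat.cast_inj] at heq
  exact hpq (Prod.ext heq.1 heq.2)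

/-- A positive linear functional on the Newton polygon is minimized at a vertex. -/
theorem exists_vertex_le (R : ℝ → ℝ → ℝ) (hts : (tsupp R).Nonempty) {A B : ℝ} (hA : 0 < A)
    (hB : 0 < B) :
    ∃ p : ℕ × ℕ, ((p.1 : ℝ), (p.2 : ℝ)) ∈ (newtonPolygon R).extremePoints ℝ ∧
      ∀ q ∈ newtonPolygon R, A * p.1 + B * p.2 ≤ A * q.1 + B * q.2 := by
  obtain ⟨p₀, hp₀⟩ := hts
  set c : ℝ := A * p₀.1 + B * p₀.2
  have hfin : {p ∈ tsupp R | A * p.1 + B * p.2 ≤ c}.Finite := by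
    apply ((Set.finite_Iic ⌊c / A⌋₊).prod (Set.finite_Iic ⌊c / B⌋₊)).subset
    rintro ⟨a, b⟩ ⟨-, h⟩
    simp only at h
    have ha : 0 ≤ A * (a : ℝ) := by positivity
    have hb : 0 ≤ B * (b : ℝ) := by positivity
    refine ⟨Nat.le_floor ?_, Nat.le_floor ?_⟩
    · rw [le_div_iff₀ hA]; linarith
    · rw [le_div_iff₀ hB]; linarith
  obtain ⟨v, ⟨hv, hvc⟩, hmin⟩ := Set.exists_min_image _
    (fun p : ℕ × ℕ => toLex (A * (p.1 : ℝ) + B * p.2, (p.1 : ℝ))) hfin ⟨p₀, hp₀, le_rfl⟩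
  have hlex : ∀ p ∈ tsupp R, A * (v.1 : ℝ) + B * v.2 < A * p.1 + B * p.2 ∨
      (A * (v.1 : ℝ) + B * v.2 = A * p.1 + B * p.2 ∧ (v.1 : ℝ) ≤ p.1) := by
    intro p hp
    by_cases hpc : A * (p.1 : ℝ) + B * p.2 ≤ c
    · exact Prod.Lex.toLex_le_toLex.1 (hmin p ⟨hp, hpc⟩)
    · exact Or.inl (by linarith)
  have hN : ∀ q ∈ newtonPolygon R, A * (v.1 : ℝ) + B * v.2 < A * q.1 + B * q.2 ∨
      (A * (v.1 : ℝ) + B * v.2 = A * q.1 + B * q.2 ∧ (v.1 : ℝ) ≤ q.1) := by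
    have hconv : Convex ℝ {q : ℝ × ℝ | A * (v.1 : ℝ) + B * v.2 < A * q.1 + B * q.2 ∨
        (A * (v.1 : ℝ) + B * v.2 = A * q.1 + B * q.2 ∧ (v.1 : ℝ) ≤ q.1)} := by
      rw [convex_iff_forall_pos]
      intro x hx y hy a b ha hb hab
      simp only [mem_ofPred_eq, Prod.fst_add, Prod.snd_add, Prod.smul_fst, Prod.smul_snd,
        smul_eq_mul] at hx hy ⊢
      generalize hm : A * (v.1 : ℝ) + B * v.2 = m at hx hy ⊢
      have e : A * (a * x.1 + b * y.1) + B * (a * x.2 + b * y.2)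
          = a * (A * x.1 + B * x.2) + b * (A * y.1 + B * y.2) := by ring
      rw [e]
      generalize A * x.1 + B * x.2 = lx at hx ⊢
      generalize A * y.1 + B * y.2 = ly at hy ⊢
      obtain rfl : b = 1 - a := by linarith
      rcases hx with hx | ⟨rfl, hx⟩ <;> rcases hy with hy | ⟨hy', hy⟩
      · left; nlinarith
      · left; subst hy'; nlinarith
      · left; nlinarith
      · right; subst hy'; exact ⟨by ring, by nlinarith⟩
    intro q hq
    refine convexHull_min ?_ hconv hq
    intro q hq
    simp only [mem_iUnion, mem_ofPred_eq, exists_prop] at hq ⊢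
    obtain ⟨p, hp, h1, h2⟩ := hq
    have h1' := mul_le_mul_of_nonneg_left h1 hA.le
    have h2' := mul_le_mul_of_nonneg_left h2 hB.le
    rcases hlex p hp with h | ⟨h, h'⟩
    · left; linarith
    · rcases (add_le_add h1' h2').lt_or_eq with h3 | h3
      · left; linarith
      · right; exact ⟨by linarith, by linarith⟩
  refine ⟨v, mem_extremePoints.2 ⟨?_, ?_⟩, fun q hq => ?_⟩
  · apply subset_convexHull
    simp only [mem_iUnion, mem_ofPred_eq, exists_prop]
    exact ⟨v, hv, le_rfl, le_rfl⟩
  · rintro u hu w hw ⟨a, b, ha, hb, hab, h⟩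
    have h1 : a * u.1 + b * w.1 = v.1 := by simpa using congrArg Prod.fst h
    have h2 : a * u.2 + b * w.2 = v.2 := by simpa using congrArg Prod.snd h
    obtain rfl : b = 1 - a := by linarith
    have key : a * (A * u.1 + B * u.2 - (A * (v.1 : ℝ) + B * v.2)) +
        (1 - a) * (A * w.1 + B * w.2 - (A * (v.1 : ℝ) + B * v.2)) = 0 := by
      rw [← h1, ← h2]; ring
    have hu0 : A * (v.1 : ℝ) + B * v.2 ≤ A * u.1 + B * u.2 :=
      (hN u hu).elim le_of_lt fun h => h.1.le
    have hw0 : A * (v.1 : ℝ) + B * v.2 ≤ A * w.1 + B * w.2 :=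
      (hN w hw).elim le_of_lt fun h => h.1.le
    have hul : A * (v.1 : ℝ) + B * v.2 = A * u.1 + B * u.2 := by
      by_contra hne
      nlinarith [mul_pos ha (sub_pos.2 (lt_of_le_of_ne hu0 hne)),
        mul_nonneg hb.le (sub_nonneg.2 hw0)]
    have hwl : A * (v.1 : ℝ) + B * v.2 = A * w.1 + B * w.2 := by
      by_contra hne
      nlinarith [mul_pos hb (sub_pos.2 (lt_of_le_of_ne hw0 hne)),
        mul_nonneg ha.le (sub_nonneg.2 hu0)]
    have hu1 : (v.1 : ℝ) ≤ u.1 := (hN u hu).elim (fun h => absurd hul h.ne) fun h => h.2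
    have hw1 : (v.1 : ℝ) ≤ w.1 := (hN w hw).elim (fun h => absurd hwl h.ne) fun h => h.2
    have hue : u.1 = v.1 := by
      refine le_antisymm ?_ hu1
      by_contra! hlt
      nlinarith [mul_pos ha (sub_pos.2 hlt), mul_nonneg hb.le (sub_nonneg.2 hw1)]
    have hwe : w.1 = v.1 := by
      refine le_antisymm ?_ hw1
      by_contra! hlt
      nlinarith [mul_pos hb (sub_pos.2 hlt), mul_nonneg ha.le (sub_nonneg.2 hu1)]
    rw [hue] at hul
    rw [hwe] at hwl
    exact ⟨Prod.ext hue (mul_left_cancel₀ hB.ne' (by linarith)),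
      Prod.ext hwe (mul_left_cancel₀ hB.ne' (by linarith))⟩
  · exact (hN q hq).elim le_of_lt fun h => h.1.le

theorem vertexFn_eq_sqrt_finset_sum (R : ℝ → ℝ → ℝ) (x y : ℝ) :
    vertexFn R x y =
      Real.sqrt (∑ p ∈ (finite_vertices R).toFinset, x ^ (2 * p.1) * y ^ (2 * p.2)) := by
  rw [vertexFn, ← Finset.tsum_subtype' (finite_vertices R).toFinset
    (fun p : ℕ × ℕ => x ^ (2 * p.1) * y ^ (2 * p.2)), ← tsum_subtype, Set.Finite.coe_toFinset]

theorem continuous_vertexFn (R : ℝ → ℝ → ℝ) :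
    Continuous fun p : ℝ × ℝ => vertexFn R p.1 p.2 := by
  simp only [vertexFn_eq_sqrt_finset_sum]
  fun_prop

theorem vertexFn_nonneg (R : ℝ → ℝ → ℝ) (x y : ℝ) : 0 ≤ vertexFn R x y := Real.sqrt_nonneg _

/-- Off the axes of the unit square, `F*` dominates `|x y|^t` for every point `(t, t)` of the
Newton polygon. -/
theorem rpow_mul_rpow_le_vertexFn (R : ℝ → ℝ → ℝ) (hts : (tsupp R).Nonempty) {t : ℝ}
    (ht : (t, t) ∈ newtonPolygon R) {x y : ℝ} (hx : 0 < |x|) (hx1 : |x| < 1) (hy : 0 < |y|)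
    (hy1 : |y| < 1) : |x| ^ t * |y| ^ t ≤ vertexFn R x y := by
  have hA : 0 < -Real.log |x| := by linarith [Real.log_neg hx hx1]
  have hB : 0 < -Real.log |y| := by linarith [Real.log_neg hy hy1]
  obtain ⟨p, hp, hmin⟩ := exists_vertex_le R hts hA hB
  have hle : |x| ^ t * |y| ^ t ≤ |x| ^ p.1 * |y| ^ p.2 := by
    rw [← Real.rpow_natCast, ← Real.rpow_natCast, Real.rpow_def_of_pos hx,
      Real.rpow_def_of_pos hy, Real.rpow_def_of_pos hx, Real.rpow_def_of_pos hy,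
      ← Real.exp_add, ← Real.exp_add, Real.exp_le_exp]
    have := hmin _ ht
    simp only at this
    linarith
  refine hle.trans ?_
  rw [vertexFn_eq_sqrt_finset_sum]
  apply Real.le_sqrt_of_sq_le
  have hsq : (|x| ^ p.1 * |y| ^ p.2) ^ 2 = x ^ (2 * p.1) * y ^ (2 * p.2) := by
    rw [pow_mul, pow_mul, ← sq_abs x, ← sq_abs y]; ring
  rw [hsq]
  refine Finset.single_le_sum (f := fun p : ℕ × ℕ => x ^ (2 * p.1) * y ^ (2 * p.2)) ?_
    ((finite_vertices R).mem_toFinset.2 hp)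
  intro q _
  simp only [pow_mul]
  positivity

theorem integrableOn_abs_rpow {a : ℝ} (ha : -1 < a) :
    IntegrableOn (fun x : ℝ => |x| ^ a) (Ioo (-1) 1) := by
  have h1 : IntervalIntegrable (fun x : ℝ => |x| ^ a) volume 0 1 := by
    refine (intervalIntegral.intervalIntegrable_rpow' ha).congr ?_
    intro x hx
    rw [uIoc_of_le zero_le_one] at hx
    simp only [abs_of_pos hx.1]
  have h2 : IntervalIntegrable (fun x : ℝ => |x| ^ a) volume (-1) 0 := by
    rw [IntervalIntegrable.iff_comp_neg]
    simpa using h1.symm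
  exact ((intervalIntegrable_iff_integrableOn_Ioc_of_le (by norm_num)).1 (h2.trans h1)).mono_set
    Ioo_subset_Ioc_self

/-- `(F*)^{-r}` is integrable near the origin when `r` is less than the inverse of the Newton
distance. -/
theorem integrableOn_vertexFn_rpow (R : ℝ → ℝ → ℝ) (hts : (tsupp R).Nonempty) {r : ℝ}
    (hr : 0 < r) (hrd : newtonDist R < 1 / r) :
    IntegrableOn (fun p : ℝ × ℝ => vertexFn R p.1 p.2 ^ (-r)) (Ioo (-1) 1 ×ˢ Ioo (-1) 1) := by
  have hne : {t : ℝ | (t, t) ∈ newtonPolygon R}.Nonempty := by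
    obtain ⟨p, hp⟩ := hts
    refine ⟨(p.1 : ℝ) + p.2, subset_convexHull ℝ _ ?_⟩
    simp only [mem_iUnion, mem_ofPred_eq, exists_prop]
    exact ⟨p, hp, by simp, by simp⟩
  obtain ⟨t, ht, htr⟩ := exists_lt_of_csInf_lt hne hrd
  have hrt : -1 < -(r * t) := by
    rw [lt_div_iff₀ hr] at htr; linarith
  have hdom : IntegrableOn (fun p : ℝ × ℝ => |p.1| ^ (-(r * t)) * |p.2| ^ (-(r * t)))
      (Ioo (-1) 1 ×ˢ Ioo (-1) 1) := by
    rw [IntegrableOn, Measure.volume_eq_prod, ← Measure.prod_restrict]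
    exact (integrableOn_abs_rpow hrt).mul_prod (integrableOn_abs_rpow hrt)
  refine Integrable.mono' hdom
    ((continuous_vertexFn R).measurable.pow_const _).aestronglyMeasurable ?_
  have hax : ∀ᵐ p : ℝ × ℝ, p.1 ≠ 0 ∧ p.2 ≠ 0 := by
    have h1 : ∀ᵐ x : ℝ, x ≠ 0 := Measure.ae_ne volume 0
    exact (Measure.quasiMeasurePreserving_fst.ae h1).and
      (Measure.quasiMeasurePreserving_snd.ae h1)
  filter_upwards [ae_restrict_of_ae hax,
    ae_restrict_mem (measurableSet_Ioo.prod measurableSet_Ioo)] with p hp hmem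
  have hx := abs_pos.2 hp.1
  have hy := abs_pos.2 hp.2
  have hle := rpow_mul_rpow_le_vertexFn R hts ht hx (abs_lt.2 hmem.1) hy (abs_lt.2 hmem.2)
  rw [Real.norm_of_nonneg (Real.rpow_nonneg (vertexFn_nonneg _ _ _) _)]
  refine (Real.rpow_le_rpow_of_nonpos (by positivity) hle (by linarith)).trans_eq ?_
  rw [Real.mul_rpow (by positivity) (by positivity), ← Real.rpow_mul hx.le,
    ← Real.rpow_mul hy.le]
  ring_nf

/-- Vertical shears of the plane preserve area. -/
theorem measurePreserving_shear {ψ : ℝ → ℝ} (hψ : Measurable ψ) :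
    MeasurePreserving (fun p : ℝ × ℝ => (p.1, p.2 - ψ p.1)) volume volume := by
  refine (MeasurePreserving.id (volume : Measure ℝ)).skew_product
    (g := fun x y => y - ψ x) ?_ ?_
  · exact measurable_snd.sub (hψ.comp measurable_fst)
  · exact Eventually.of_forall fun x => (measurePreserving_sub_right volume (ψ x)).map_eq

theorem ContDiffOn.deriv_snd {g : ℝ → ℝ → ℝ} {V : Set (ℝ × ℝ)} (hV : IsOpen V)
    (hg : ContDiffOn ℝ (⊤ : ℕ∞) (fun p : ℝ × ℝ => g p.1 p.2) V) :
    ContDiffOn ℝ (⊤ : ℕ∞) (fun p : ℝ × ℝ => deriv (fun y => g p.1 y) p.2) V := by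
  have h := (hg.fderiv_of_isOpen hV (m := (⊤ : ℕ∞)) (by simp)).clm_apply
    (contDiffOn_const (c := ((0 : ℝ), (1 : ℝ))))
  refine h.congr fun p hp => ?_
  have hd := ((hg.contDiffAt (hV.mem_nhds hp)).differentiableAt (by simp)).hasFDerivAt
  exact (hd.comp_hasDerivAt p.2 ((hasDerivAt_const p.2 p.1).prodMk (hasDerivAt_id p.2))).deriv

theorem ContDiffOn.deriv_fst {g : ℝ → ℝ → ℝ} {V : Set (ℝ × ℝ)} (hV : IsOpen V)
    (hg : ContDiffOn ℝ (⊤ : ℕ∞) (fun p : ℝ × ℝ => g p.1 p.2) V) :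
    ContDiffOn ℝ (⊤ : ℕ∞) (fun p : ℝ × ℝ => deriv (fun x => g x p.2) p.1) V := by
  have h := (hg.fderiv_of_isOpen hV (m := (⊤ : ℕ∞)) (by simp)).clm_apply
    (contDiffOn_const (c := ((1 : ℝ), (0 : ℝ))))
  refine h.congr fun p hp => ?_
  have hd := ((hg.contDiffAt (hV.mem_nhds hp)).differentiableAt (by simp)).hasFDerivAt
  exact (hd.comp_hasDerivAt p.1 ((hasDerivAt_id p.1).prodMk (hasDerivAt_const p.1 p.2))).deriv

theorem contDiffOn_pderiv2 {g : ℝ → ℝ → ℝ} {V : Set (ℝ × ℝ)} (hV : IsOpen V)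
    (hg : ContDiffOn ℝ (⊤ : ℕ∞) (fun p : ℝ × ℝ => g p.1 p.2) V) (a b : ℕ) :
    ContDiffOn ℝ (⊤ : ℕ∞) (fun p : ℝ × ℝ => pderiv2 g a b p.1 p.2) V := by
  induction a with
  | zero =>
    simp only [pderiv2, iteratedDeriv_zero]
    induction b with
    | zero => simpa only [iteratedDeriv_zero] using hg
    | succ b ih =>
      simp only [iteratedDeriv_succ]
      exact ContDiffOn.deriv_snd (g := fun x y => iteratedDeriv b (fun y' => g x y') y) hV ih
  | succ a ih =>
    simp only [pderiv2, iteratedDeriv_succ]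
    exact ContDiffOn.deriv_fst (g := fun x y => pderiv2 g a b x y) hV ih

theorem continuousOn_hessDet {g : ℝ → ℝ → ℝ} {V : Set (ℝ × ℝ)} (hV : IsOpen V)
    (hg : ContDiffOn ℝ (⊤ : ℕ∞) (fun p : ℝ × ℝ => g p.1 p.2) V) :
    ContinuousOn (fun p : ℝ × ℝ => hessDet g p.1 p.2) V :=
  ((contDiffOn_pderiv2 hV hg 2 0).continuousOn.mul
    (contDiffOn_pderiv2 hV hg 0 2).continuousOn).sub
      ((contDiffOn_pderiv2 hV hg 1 1).continuousOn.pow 2)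

/-- Integrability of the damping factor (key step in the `L^∞` estimates, Theorem 3.1):
for `s > -2/(d-2)` and `δ` small enough, `F*(x, y-ψ(x))^{s(1/2 - 1/d)} |D(x,y)|^{δ s}`
is integrable near the origin. -/
theorem stmt_14 (f : ℝ → ℝ → ℝ) (U₀ : Set (ℝ × ℝ)) (hU₀ : U₀ ∈ 𝓝 ((0 : ℝ), (0 : ℝ)))
    (hsm : ContDiffOn ℝ (⊤ : ℕ∞) (fun p : ℝ × ℝ => f p.1 p.2) U₀)
    (h0 : f 0 0 = 0) (hgrad : fderiv ℝ (fun p : ℝ × ℝ => f p.1 p.2) (0, 0) = 0)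
    (ψ : ℝ → ℝ) (hψ : ContDiff ℝ (⊤ : ℕ∞) ψ) (hψ0 : ψ 0 = 0)
    (F : ℝ → ℝ → ℝ) (hF : ∀ x y, F x y = f x (y + ψ x))
    (hts : (tsupp F).Nonempty) (hd : 2 < newtonDist F)
    (hD : ∃ ε₀ > (0 : ℝ), ∃ U ∈ 𝓝 ((0 : ℝ), (0 : ℝ)),
      IntegrableOn (fun p : ℝ × ℝ => |hessDet f p.1 p.2| ^ (-ε₀)) U) :
    ∀ s : ℝ, -2 / (newtonDist F - 2) < s →
      ∃ δ > (0 : ℝ), ∃ U ∈ 𝓝 ((0 : ℝ), (0 : ℝ)),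
        IntegrableOn
          (fun p : ℝ × ℝ =>
            vertexFn F p.1 (p.2 - ψ p.1) ^ (s * (1 / 2 - 1 / newtonDist F)) *
              |hessDet f p.1 p.2| ^ (δ * s)) U := by
  intro s hs
  have hψm : Measurable ψ := hψ.continuous.measurable
  have hvc : Continuous fun p : ℝ × ℝ => vertexFn F p.1 (p.2 - ψ p.1) :=
    (continuous_vertexFn F).comp
      (continuous_fst.prodMk (continuous_snd.sub (hψ.continuous.comp continuous_fst)))
  have hd0 : 0 < newtonDist F := by linarith
  rcases le_or_gt 0 s with hs0 | hs0
  · have hV : interior U₀ ∈ 𝓝 ((0 : ℝ), (0 : ℝ)) := interior_mem_nhds.2 hU₀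
    have hDc := continuousOn_hessDet isOpen_interior (hsm.mono interior_subset)
    obtain ⟨K, hK, hKV, hKc⟩ := local_compact_nhds hV
    have hexp : 0 ≤ s * (1 / 2 - 1 / newtonDist F) :=
      mul_nonneg hs0 (sub_nonneg.2 (one_div_le_one_div_of_le two_pos hd.le))
    refine ⟨1, one_pos, K, hK, ContinuousOn.integrableOn_compact hKc (ContinuousOn.mul ?_ ?_)⟩
    · exact hvc.continuousOn.rpow_const fun _ _ => Or.inr hexp
    · exact (hDc.mono hKV).abs.rpow_const fun _ _ => Or.inr (by linarith)
  · obtain ⟨ε₀, hε₀, UD, hUD, hdom⟩ := hD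
    set r : ℝ := -(s * (1 / 2 - 1 / newtonDist F)) with hr
    have hr0 : 0 < r := by
      have := one_div_lt_one_div_of_lt two_pos hd
      rw [hr]; nlinarith
    have hrd : r * newtonDist F < 1 := by
      have h1 : r * newtonDist F = -s * (newtonDist F - 2) / 2 := by
        rw [hr]; field_simp
      rw [div_lt_iff₀ (by linarith)] at hs
      rw [h1]; linarith
    obtain ⟨q, hq1, hq2⟩ := exists_between ((one_lt_div (mul_pos hr0 hd0)).2 hrd)
    have hq0 : 0 < q := by linarith
    rw [lt_div_iff₀ (mul_pos hr0 hd0)] at hq2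
    have hconj := Real.HolderConjugate.conjExponent hq1
    set q' := Real.conjExponent q
    have hq'0 : 0 < q' := hconj.symm.pos
    have hstar : IntegrableOn (fun p : ℝ × ℝ => vertexFn F p.1 (p.2 - ψ p.1) ^ (-(r * q)))
        ((fun p : ℝ × ℝ => (p.1, p.2 - ψ p.1)) ⁻¹' (Ioo (-1) 1 ×ˢ Ioo (-1) 1)) := by
      have h := integrableOn_vertexFn_rpow F hts (mul_pos hr0 hq0)
        ((lt_div_iff₀ (mul_pos hr0 hq0)).2 (by linarith))
      exact ((measurePreserving_shear hψm).restrict_preimage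
        (measurableSet_Ioo.prod measurableSet_Ioo)).integrable_comp_of_integrable h
    have hnhds : (fun p : ℝ × ℝ => (p.1, p.2 - ψ p.1)) ⁻¹' (Ioo (-1) 1 ×ˢ Ioo (-1) 1) ∈
        𝓝 ((0 : ℝ), (0 : ℝ)) := by
      refine IsOpen.mem_nhds ((isOpen_Ioo.prod isOpen_Ioo).preimage
        (continuous_fst.prodMk (continuous_snd.sub (hψ.continuous.comp continuous_fst)))) ?_
      simp [hψ0]
    refine ⟨ε₀ / (-s * q'), div_pos hε₀ (mul_pos (neg_pos.2 hs0) hq'0), _,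
      inter_mem hnhds hUD, ?_⟩
    have hδ : ε₀ / (-s * q') * s = -ε₀ * q'⁻¹ := by
      field_simp [hs0.ne, hq'0.ne']
    have hB : ∀ p : ℝ × ℝ, |hessDet f p.1 p.2| ^ (ε₀ / (-s * q') * s) =
        (|hessDet f p.1 p.2| ^ (-ε₀)) ^ q'⁻¹ := fun p => by
      rw [hδ, Real.rpow_mul (abs_nonneg _)]
    have hA : ∀ p : ℝ × ℝ, (vertexFn F p.1 (p.2 - ψ p.1) ^ (-r)) ^ q =
        vertexFn F p.1 (p.2 - ψ p.1) ^ (-(r * q)) := fun p => by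
      rw [← Real.rpow_mul (vertexFn_nonneg _ _ _), neg_mul]
    have hintD := hdom.mono_set (inter_subset_right (s := (fun p : ℝ × ℝ =>
      (p.1, p.2 - ψ p.1)) ⁻¹' (Ioo (-1) 1 ×ˢ Ioo (-1) 1)))
    have hsr : s * (1 / 2 - 1 / newtonDist F) = -r := by rw [hr, neg_neg]
    simp only [hB, hsr]
    refine Integrable.mono'
      (((hstar.mono_set inter_subset_left).div_const q).add (hintD.div_const q')) ?_ ?_
    · exact ((hvc.measurable.pow_const _).aemeasurable.mul
        (hintD.aestronglyMeasurable.aemeasurable.pow_const _)).aestronglyMeasurable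
    · refine Eventually.of_forall fun p => ?_
      have ha : 0 ≤ vertexFn F p.1 (p.2 - ψ p.1) ^ (-r) :=
        Real.rpow_nonneg (vertexFn_nonneg _ _ _) _
      have hb : 0 ≤ |hessDet f p.1 p.2| ^ (-ε₀) := Real.rpow_nonneg (abs_nonneg _) _
      rw [Real.norm_of_nonneg (mul_nonneg ha (Real.rpow_nonneg hb _))]
      have hy := Real.young_inequality_of_nonneg ha (Real.rpow_nonneg hb q'⁻¹) hconj
      rwa [hA, Real.rpow_inv_rpow hb hq'0.ne'] at hy

end
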